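/- In a weakly idempotent complete additive category, the stable exact sequences form an exact structure (in the sense of Quillen–Keller). -/

import Mathlib

open CategoryTheory CategoryTheory.Limits ZeroObject

universe v u

variable {𝒞 : Type u} [Category.{v} 𝒞] [Preadditive 𝒞] [HasZeroObject 𝒞] [HasBinaryBiproducts 𝒞]

/-- `d` is a cokernel of some morphism. -/
def IsCokernelOfSome {B X : 𝒞} (d : B ⟶ X) : Prop :=
  ∃ (A : 𝒞) (f : A ⟶ B) (w : f ≫ d = 0), Nonempty (IsColimit (CokernelCofork.ofπ d w))

/-- `i` is a kernel of some morphism. -/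
def IsKernelOfSome {A B : 𝒞} (i : A ⟶ B) : Prop :=
  ∃ (X : 𝒞) (f : B ⟶ X) (w : i ≫ f = 0), Nonempty (IsLimit (KernelFork.ofι i w))

/-- A semi-stable cokernel: a cokernel whose pullback along every morphism exists
and is again a cokernel. -/
def IsSemiStableCokernel {B X : 𝒞} (d : B ⟶ X) : Prop :=
  IsCokernelOfSome d ∧ ∀ (C' : 𝒞) (h : C' ⟶ X), ∃ (B' : 𝒞) (g : B' ⟶ B) (d' : B' ⟶ C'),
    IsPullback g d' d h ∧ IsCokernelOfSome d'

/-- A semi-stable kernel: a kernel whose pushout along every morphism exists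
and is again a kernel. -/
def IsSemiStableKernel {A B : 𝒞} (i : A ⟶ B) : Prop :=
  IsKernelOfSome i ∧ ∀ (A' : 𝒞) (h : A ⟶ A'), ∃ (P : 𝒞) (g : B ⟶ P) (i' : A' ⟶ P),
    IsPushout i h g i' ∧ IsKernelOfSome i'

/-- A stable exact sequence: a kernel-cokernel pair with semi-stable kernel and
semi-stable cokernel. -/
def IsStableExact {A B X : 𝒞} (i : A ⟶ B) (d : B ⟶ X) : Prop :=
  (∃ w : i ≫ d = 0, Nonempty (IsLimit (KernelFork.ofι i w)) ∧
      Nonempty (IsColimit (CokernelCofork.ofπ d w))) ∧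
    IsSemiStableKernel i ∧ IsSemiStableCokernel d

/-- An exact structure in the sense of Quillen--Keller: a class of kernel-cokernel
pairs (conflations) satisfying the axioms [E0], [E1], [E2], [E2op]. -/
structure IsExactStructure
    (E : ∀ ⦃A B X : 𝒞⦄, (A ⟶ B) → (B ⟶ X) → Prop) : Prop where
  ker_coker : ∀ ⦃A B X : 𝒞⦄ (i : A ⟶ B) (d : B ⟶ X), E i d →
    ∃ w : i ≫ d = 0, Nonempty (IsLimit (KernelFork.ofι i w)) ∧
      Nonempty (IsColimit (CokernelCofork.ofπ d w))
  E0 : ∃ (A : 𝒞) (i : A ⟶ (0 : 𝒞)), E i (𝟙 (0 : 𝒞))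
  E1 : ∀ ⦃A B X A' Y : 𝒞⦄ (i : A ⟶ B) (d : B ⟶ X) (i' : A' ⟶ X) (d' : X ⟶ Y),
    E i d → E i' d' → ∃ (A2 : 𝒞) (i2 : A2 ⟶ B), E i2 (d ≫ d')
  E2 : ∀ ⦃A B X X' : 𝒞⦄ (i : A ⟶ B) (d : B ⟶ X), E i d → ∀ (h : X' ⟶ X),
    ∃ (B' : 𝒞) (g : B' ⟶ B) (d' : B' ⟶ X') (_ : IsPullback g d' d h)
      (A' : 𝒞) (i' : A' ⟶ B'), E i' d'
  E2op : ∀ ⦃A B X A' : 𝒞⦄ (i : A ⟶ B) (d : B ⟶ X), E i d → ∀ (h : A ⟶ A'),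
    ∃ (P : 𝒞) (g : B ⟶ P) (i' : A' ⟶ P) (_ : IsPushout i h g i')
      (Y : 𝒞) (d' : P ⟶ Y), E i' d'


/-- Elementary form of: `i` is a kernel of `f`. -/
def IsKer {𝒟 : Type u} [Category.{v} 𝒟] [Preadditive 𝒟] {A B X : 𝒟} (i : A ⟶ B) (f : B ⟶ X) : Prop :=
  i ≫ f = 0 ∧ Mono i ∧ ∀ (Z : 𝒟) (t : Z ⟶ B), t ≫ f = 0 → ∃ l : Z ⟶ A, l ≫ i = t

/-- Elementary form of: `d` is a cokernel of `f`. -/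
def IsCok {𝒟 : Type u} [Category.{v} 𝒟] [Preadditive 𝒟] {A B X : 𝒟} (f : A ⟶ B) (d : B ⟶ X) : Prop :=
  f ≫ d = 0 ∧ Epi d ∧ ∀ (Z : 𝒟) (t : B ⟶ Z), f ≫ t = 0 → ∃ l : X ⟶ Z, d ≫ l = t

section basic

variable {𝒟 : Type u} [Category.{v} 𝒟] [Preadditive 𝒟]

lemma isKer_iff {A B X : 𝒟} (i : A ⟶ B) (f : B ⟶ X) :
    IsKer i f ↔ ∃ w : i ≫ f = 0, Nonempty (IsLimit (KernelFork.ofι i w)) := by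
  constructor
  · rintro ⟨w, hm, hl⟩
    refine ⟨w, ⟨KernelFork.IsLimit.ofι i w (fun t ht => (hl _ t ht).choose)
      (fun t ht => (hl _ t ht).choose_spec) ?_⟩⟩
    intro W t ht m hm'
    rw [← cancel_mono i, hm', (hl _ t ht).choose_spec]
  · rintro ⟨w, ⟨hl⟩⟩
    refine ⟨w, ⟨fun a b hab => Fork.IsLimit.hom_ext hl hab⟩, fun Z t ht => ?_⟩
    obtain ⟨l, hl'⟩ := KernelFork.IsLimit.lift' hl t ht
    exact ⟨l, hl'⟩

lemma isCok_iff {A B X : 𝒟} (f : A ⟶ B) (d : B ⟶ X) :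
    IsCok f d ↔ ∃ w : f ≫ d = 0, Nonempty (IsColimit (CokernelCofork.ofπ d w)) := by
  constructor
  · rintro ⟨w, hm, hl⟩
    refine ⟨w, ⟨CokernelCofork.IsColimit.ofπ d w (fun t ht => (hl _ t ht).choose)
      (fun t ht => (hl _ t ht).choose_spec) ?_⟩⟩
    intro W t ht m hm'
    rw [← cancel_epi d, hm', (hl _ t ht).choose_spec]
  · rintro ⟨w, ⟨hl⟩⟩
    refine ⟨w, ⟨fun a b hab => Cofork.IsColimit.hom_ext hl hab⟩, fun Z t ht => ?_⟩
    obtain ⟨l, hl'⟩ := CokernelCofork.IsColimit.desc' hl t ht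
    exact ⟨l, hl'⟩

lemma isKer_op {A B X : 𝒟} (f : A ⟶ B) (d : B ⟶ X) : IsKer d.op f.op ↔ IsCok f d := by
  constructor
  · rintro ⟨w, hm, hl⟩
    refine ⟨Quiver.Hom.op_inj (by simpa using w), unop_epi_of_mono d.op, fun Z t ht => ?_⟩
    obtain ⟨l, hl'⟩ := hl _ t.op (by rw [← op_comp, ht, op_zero])
    exact ⟨l.unop, Quiver.Hom.op_inj (by simpa using hl')⟩
  · rintro ⟨w, hm, hl⟩
    refine ⟨by rw [← op_comp, w, op_zero], inferInstance, fun Z t ht => ?_⟩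
    obtain ⟨l, hl'⟩ := hl _ t.unop (Quiver.Hom.op_inj (by simpa using ht))
    exact ⟨l.op, Quiver.Hom.unop_inj (by simpa using hl')⟩

lemma isCok_op {A B X : 𝒟} (f : A ⟶ B) (d : B ⟶ X) : IsCok d.op f.op ↔ IsKer f d := by
  constructor
  · rintro ⟨w, hm, hl⟩
    refine ⟨Quiver.Hom.op_inj (by simpa using w), unop_mono_of_epi f.op, fun Z t ht => ?_⟩
    obtain ⟨l, hl'⟩ := hl _ t.op (by rw [← op_comp, ht, op_zero])
    exact ⟨l.unop, Quiver.Hom.op_inj (by simpa using hl')⟩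
  · rintro ⟨w, hm, hl⟩
    refine ⟨by rw [← op_comp, w, op_zero], inferInstance, fun Z t ht => ?_⟩
    obtain ⟨l, hl'⟩ := hl _ t.unop (Quiver.Hom.op_inj (by simpa using ht))
    exact ⟨l.op, Quiver.Hom.unop_inj (by simpa using hl')⟩

lemma isKernelOfSome_iff {A B : 𝒟} (i : A ⟶ B) :
    IsKernelOfSome i ↔ ∃ (X : 𝒟) (f : B ⟶ X), IsKer i f := by
  simp only [IsKernelOfSome, isKer_iff]

lemma isCokernelOfSome_iff {B X : 𝒟} (d : B ⟶ X) :
    IsCokernelOfSome d ↔ ∃ (A : 𝒟) (f : A ⟶ B), IsCok f d := by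
  simp only [IsCokernelOfSome, isCok_iff]

lemma kernelSome_op {B X : 𝒟} (d : B ⟶ X) : IsKernelOfSome d.op ↔ IsCokernelOfSome d := by
  rw [isKernelOfSome_iff, isCokernelOfSome_iff]
  constructor
  · rintro ⟨Y, f, h⟩
    exact ⟨Y.unop, f.unop, (isKer_op f.unop d).1 h⟩
  · rintro ⟨Y, f, h⟩
    exact ⟨_, f.op, (isKer_op f d).2 h⟩

lemma cokernelSome_op {B X : 𝒟} (d : B ⟶ X) : IsCokernelOfSome d.op ↔ IsKernelOfSome d := by
  rw [isKernelOfSome_iff, isCokernelOfSome_iff]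
  constructor
  · rintro ⟨Y, f, h⟩
    exact ⟨Y.unop, f.unop, (isCok_op d f.unop).1 h⟩
  · rintro ⟨Y, f, h⟩
    exact ⟨_, f.op, (isCok_op d f).2 h⟩

lemma ssk_op {B X : 𝒟} (d : B ⟶ X) : IsSemiStableKernel d.op ↔ IsSemiStableCokernel d := by
  refine and_congr (kernelSome_op d) ⟨fun H C' h => ?_, fun H C' h => ?_⟩
  · obtain ⟨P, g, i', hp, hk⟩ := H _ h.op
    exact ⟨P.unop, g.unop, i'.unop, hp.unop.flip, (kernelSome_op i'.unop).1 hk⟩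
  · obtain ⟨P, g, i', hp, hk⟩ := H _ h.unop
    exact ⟨_, g.op, i'.op, hp.op.flip, (kernelSome_op i').2 hk⟩

lemma ssc_op {B X : 𝒟} (d : B ⟶ X) : IsSemiStableCokernel d.op ↔ IsSemiStableKernel d := by
  refine and_congr (cokernelSome_op d) ⟨fun H C' h => ?_, fun H C' h => ?_⟩
  · obtain ⟨P, g, i', hp, hk⟩ := H _ h.op
    exact ⟨P.unop, g.unop, i'.unop, hp.unop.flip, (cokernelSome_op i'.unop).1 hk⟩
  · obtain ⟨P, g, i', hp, hk⟩ := H _ h.unop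
    exact ⟨_, g.op, i'.op, hp.op.flip, (cokernelSome_op i').2 hk⟩

lemma stable_iff {A B X : 𝒟} (i : A ⟶ B) (d : B ⟶ X) : IsStableExact i d ↔
    (IsKer i d ∧ IsCok i d) ∧ IsSemiStableKernel i ∧ IsSemiStableCokernel d := by
  rw [isKer_iff, isCok_iff, IsStableExact]
  refine and_congr_left fun _ => ?_
  constructor
  · rintro ⟨w, h1, h2⟩
    exact ⟨⟨w, h1⟩, ⟨w, h2⟩⟩
  · rintro ⟨⟨w, h1⟩, ⟨_, h2⟩⟩
    exact ⟨w, h1, h2⟩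

lemma stable_op {A B X : 𝒟} (i : A ⟶ B) (d : B ⟶ X) :
    IsStableExact d.op i.op ↔ IsStableExact i d := by
  rw [stable_iff, stable_iff, isKer_op, isCok_op, ssk_op, ssc_op]
  tauto

lemma isCok_of_ker {A B X : 𝒟} {i : A ⟶ B} {d : B ⟶ X} (h : IsKer i d)
    (hd : IsCokernelOfSome d) : IsCok i d := by
  obtain ⟨Y, f, w, he, hl⟩ := (isCokernelOfSome_iff d).1 hd
  refine ⟨h.1, he, fun Z t ht => hl Z t ?_⟩
  obtain ⟨l, rfl⟩ := h.2.2 _ f w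
  rw [Category.assoc, ht, comp_zero]

lemma ker_of_isPushout {A B A' P : 𝒟} {i : A ⟶ B} {h : A ⟶ A'} {g : B ⟶ P} {i' : A' ⟶ P}
    (H : IsSemiStableKernel i) (hp : IsPushout i h g i') : IsKernelOfSome i' := by
  obtain ⟨P', g', k, hp', hk⟩ := H.2 _ h
  obtain ⟨X, f, w, hm, hl⟩ := (isKernelOfSome_iff k).1 hk
  let e := hp.isoIsPushout _ _ hp'
  have hek : i' ≫ e.hom = k := by simp [e]
  refine (isKernelOfSome_iff i').2 ⟨X, e.hom ≫ f, ?_, ?_, ?_⟩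
  · rw [← Category.assoc, hek, w]
  · rw [← hek] at hm
    exact mono_of_mono i' e.hom
  · intro Z t ht
    obtain ⟨l, hl'⟩ := hl Z (t ≫ e.hom) (by rw [Category.assoc, ht])
    refine ⟨l, ?_⟩
    rw [← cancel_mono e.hom, Category.assoc, hek, hl']

lemma ssk_of_isPushout {A B A' P : 𝒟} {i : A ⟶ B} {h : A ⟶ A'} {g : B ⟶ P} {i' : A' ⟶ P}
    (H : IsSemiStableKernel i) (hp : IsPushout i h g i') : IsSemiStableKernel i' := by
  refine ⟨ker_of_isPushout H hp, fun A2 h2 => ?_⟩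
  obtain ⟨P2, g2, k, hp2, hk⟩ := H.2 _ (h ≫ h2)
  have hw : i ≫ g2 = h ≫ h2 ≫ k := by rw [hp2.w, Category.assoc]
  refine ⟨P2, hp.desc g2 (h2 ≫ k) hw, k, ?_, hk⟩
  refine IsPushout.of_top (h₁₁ := i) (v₁₁ := h) (v₁₂ := g) ?_ (by simp) hp
  simpa using hp2

lemma ssk_iso {A B C : 𝒟} {i : A ⟶ B} (H : IsSemiStableKernel i) (e : B ⟶ C) [IsIso e] :
    IsSemiStableKernel (i ≫ e) :=
  ssk_of_isPushout (h := 𝟙 A) (g := e) H (IsPushout.of_vert_isIso ⟨by simp⟩)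

lemma ker_comp [HasZeroObject 𝒟] {A B C : 𝒟} {i : A ⟶ B} {j : B ⟶ C}
    (hi : IsSemiStableKernel i) (hj : IsSemiStableKernel j) : IsKernelOfSome (i ≫ j) := by
  obtain ⟨Q, q, z, hq, -⟩ := hi.2 0 0
  obtain ⟨R, f, k, hR, hk⟩ := hj.2 _ q
  obtain ⟨_, _, -, hkm, -⟩ := (isKernelOfSome_iff k).1 hk
  obtain ⟨Y, φ, wj, hjm, hjl⟩ := (isKernelOfSome_iff j).1 hj.1
  obtain ⟨W, ψ, wi, him, hil⟩ := (isKernelOfSome_iff i).1 hi.1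
  have hiq : i ≫ q = 0 := by rw [hq.w, zero_comp]
  refine (isKernelOfSome_iff _).2 ⟨R, f, ?_, mono_comp i j, fun Z t ht => ?_⟩
  · rw [Category.assoc, hR.w, ← Category.assoc, hiq, zero_comp]
  · have h1 : t ≫ φ = 0 := by
      have : f ≫ hR.desc φ 0 (by simp [wj]) = φ := by simp
      rw [← this, ← Category.assoc, ht, zero_comp]
    obtain ⟨l, rfl⟩ := hjl _ t h1
    have h2 : l ≫ q = 0 := by
      rw [← cancel_mono k, Category.assoc, ← hR.w, ← Category.assoc, ht, zero_comp]
    have h3 : l ≫ ψ = 0 := by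
      have : q ≫ hq.desc ψ 0 (by simp [wi]) = ψ := by simp
      rw [← this, ← Category.assoc, h2, zero_comp]
    obtain ⟨m, rfl⟩ := hil _ l h3
    exact ⟨m, by simp⟩

lemma ssk_comp [HasZeroObject 𝒟] {A B C : 𝒟} {i : A ⟶ B} {j : B ⟶ C}
    (hi : IsSemiStableKernel i) (hj : IsSemiStableKernel j) : IsSemiStableKernel (i ≫ j) := by
  refine ⟨ker_comp hi hj, fun A' h => ?_⟩
  obtain ⟨P, g, i', hp, -⟩ := hi.2 _ h
  obtain ⟨R, f, j', hR, -⟩ := hj.2 _ g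
  exact ⟨R, f, i' ≫ j', hp.paste_horiz hR,
    ker_comp (ssk_of_isPushout hi hp) (ssk_of_isPushout hj hR)⟩

lemma ssc_comp [HasZeroObject 𝒟] {A B C : 𝒟} {i : A ⟶ B} {j : B ⟶ C}
    (hi : IsSemiStableCokernel i) (hj : IsSemiStableCokernel j) :
    IsSemiStableCokernel (i ≫ j) := by
  rw [← ssk_op] at *
  rw [op_comp]
  exact ssk_comp hj hi

lemma ssc_of_isPullback {B X B' X' : 𝒟} {d : B ⟶ X} {h : X' ⟶ X} {g : B' ⟶ B} {d' : B' ⟶ X'}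
    (H : IsSemiStableCokernel d) (hp : IsPullback g d' d h) : IsSemiStableCokernel d' := by
  rw [← ssk_op] at *
  exact ssk_of_isPushout H hp.op.flip

lemma ssk_id (A : 𝒟) [HasZeroObject 𝒟] : IsSemiStableKernel (𝟙 A) := by
  have h : ∀ A : 𝒟, IsKernelOfSome (𝟙 A) := fun A =>
    (isKernelOfSome_iff _).2 ⟨0, 0, by simp, inferInstance, fun Z t _ => ⟨t, by simp⟩⟩
  exact ⟨h A, fun A' f => ⟨A', f, 𝟙 A', IsPushout.of_horiz_isIso ⟨by simp⟩, h A'⟩⟩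

lemma ssk_inl [HasBinaryBiproducts 𝒟] (A B : 𝒟) :
    IsSemiStableKernel (biprod.inl : A ⟶ A ⊞ B) := by
  have h : ∀ A : 𝒟, IsKernelOfSome (biprod.inl : A ⟶ A ⊞ B) := fun A =>
    (isKernelOfSome_iff _).2 ⟨B, biprod.snd, by simp, inferInstance, fun Z t ht =>
      ⟨t ≫ biprod.fst, by ext <;> simp [ht]⟩⟩
  refine ⟨h A, fun A' f => ⟨A' ⊞ B, biprod.map f (𝟙 B), biprod.inl, ⟨⟨by simp⟩, ⟨?_⟩⟩, h A'⟩⟩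
  refine PushoutCocone.IsColimit.mk _ (fun s => biprod.desc s.inr (biprod.inr ≫ s.inl)) ?_ ?_ ?_
  · intro s
    ext
    · simp [s.condition]
    · simp
  · intro s
    simp
  · intro s m h1 h2
    ext
    · simp [h2]
    · simp [← h1]

lemma ssk_biprodMap [HasBinaryBiproducts 𝒟] {A A' : 𝒟} {i : A ⟶ A'} (B : 𝒟)
    (hi : IsSemiStableKernel i) : IsSemiStableKernel (biprod.map (𝟙 B) i) := by
  refine ssk_of_isPushout (h := biprod.inr) (g := biprod.inr) hi ⟨⟨by simp⟩, ⟨?_⟩⟩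
  refine PushoutCocone.IsColimit.mk _ (fun s => biprod.desc (biprod.inl ≫ s.inr) s.inl) ?_ ?_ ?_
  · intro s
    simp
  · intro s
    ext
    · simp
    · simp [s.condition]
  · intro s m h1 h2
    ext
    · simp [← h2]
    · simp [h1]

/-- Weak idempotent completeness. -/
def WIC (𝒟 : Type u) [Category.{v} 𝒟] [Preadditive 𝒟] : Prop :=
  ∀ ⦃X Y : 𝒟⦄ (r : X ⟶ Y) (s : Y ⟶ X), s ≫ r = 𝟙 Y →
      ∃ (K : 𝒟) (k : K ⟶ X), IsKer k r

lemma WIC.op (wic : WIC 𝒟) : WIC 𝒟ᵒᵖ := by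
  intro X Y r s hsr
  have h' : r.unop ≫ s.unop = 𝟙 _ := by rw [← unop_comp, hsr, unop_id]
  obtain ⟨K, k, w, hm, hl⟩ := wic _ _ h'
  obtain ⟨p, hp⟩ := hl _ (𝟙 _ - s.unop ≫ r.unop) (by simp [h'])
  refine ⟨_, p.op, (isKer_op r.unop p).2 ⟨?_, ?_, ?_⟩⟩
  · rw [← cancel_mono k, Category.assoc, hp]
    simp [reassoc_of% h']
  · have : k ≫ p = 𝟙 _ := by
      rw [← cancel_mono k, Category.assoc, hp]
      simp [reassoc_of% w]
    exact ⟨fun a b hab => by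
      have h2 := congrArg (fun t => k ≫ t) hab
      simpa [reassoc_of% this] using h2⟩
  · intro Z t ht
    exact ⟨k ≫ t, by rw [← Category.assoc, hp]; simp [ht]⟩

lemma ssk_cancel [HasZeroObject 𝒟] [HasBinaryBiproducts 𝒟] (wic : WIC 𝒟) {A B C : 𝒟} {i : A ⟶ B}
    {g : B ⟶ C} (H : IsSemiStableKernel (i ≫ g)) : IsSemiStableKernel i := by
  have hL : IsSemiStableKernel (biprod.lift i (i ≫ g)) := by
    have h1 : IsSemiStableKernel (biprod.lift i (𝟙 A)) := by
      let e : A ⊞ B ≅ B ⊞ A :=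
        { hom := biprod.lift (biprod.desc i (𝟙 B)) biprod.fst
          inv := biprod.lift biprod.snd (biprod.fst - biprod.snd ≫ i)
          hom_inv_id := by ext <;> simp
          inv_hom_id := by ext <;> simp }
      have : IsIso e.hom := Iso.isIso_hom e
      have := ssk_iso (ssk_inl A B) e.hom
      convert this using 1
      ext <;> simp [e]
    convert ssk_comp h1 (ssk_biprodMap B H) using 1
    ext <;> simp
  refine ⟨?_, fun A' h => ?_⟩
  · obtain ⟨X, f, w, hm, hl⟩ := (isKernelOfSome_iff _).1 hL.1
    have hfac : i ≫ biprod.lift (𝟙 B) g = biprod.lift i (i ≫ g) := by ext <;> simp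
    refine (isKernelOfSome_iff _).2 ⟨X, biprod.lift (𝟙 B) g ≫ f, ?_, ?_, ?_⟩
    · rw [← Category.assoc, hfac, w]
    · rw [← hfac] at hm
      exact mono_of_mono i (biprod.lift (𝟙 B) g)
    · intro Z t ht
      obtain ⟨l, hl'⟩ := hl Z (t ≫ biprod.lift (𝟙 B) g) (by simpa using ht)
      exact ⟨l, by simpa using congrArg (fun x => x ≫ biprod.fst) hl'⟩
  · obtain ⟨P, G, k, hp, hk⟩ := hL.2 _ h
    let ρ : P ⟶ C := hp.desc (biprod.desc (-g) (𝟙 C)) 0 (by simp)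
    have hGρ : G ≫ ρ = biprod.desc (-g) (𝟙 C) := by simp [ρ]
    have hkρ : k ≫ ρ = 0 := by simp [ρ]
    obtain ⟨P', ι, w, hm, hl⟩ := wic ρ (biprod.inr ≫ G) (by simp [hGρ])
    obtain ⟨p, hpι⟩ := hl _ (𝟙 P - ρ ≫ biprod.inr ≫ G) (by simp [hGρ])
    obtain ⟨g', hg'⟩ := hl _ (biprod.lift (𝟙 B) g ≫ G) (by simp [hGρ])
    obtain ⟨k', hk'⟩ := hl _ k hkρ
    have hιp : ι ≫ p = 𝟙 _ := by
      rw [← cancel_mono ι, Category.assoc, hpι]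
      simp [reassoc_of% w]
    have hkp : k ≫ p = k' := by
      rw [← cancel_mono ι, Category.assoc, hpι, hk']
      simp [reassoc_of% hkρ]
    have hGp : G ≫ p = biprod.fst ≫ g' := by
      rw [← cancel_mono ι, Category.assoc, hpι, Category.assoc, hg', Preadditive.comp_sub,
        reassoc_of% hGρ]
      ext
      · simp [biprod.lift_eq]
      · simp
    have hw : i ≫ g' = h ≫ k' := by
      rw [← cancel_mono ι, Category.assoc, hg', Category.assoc, hk', ← hp.w, ← Category.assoc]
      congr 1
      ext <;> simp
    refine ⟨P', g', k', ⟨⟨hw⟩, ⟨?_⟩⟩, ?_⟩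
    · have hs : ∀ s : PushoutCocone i h,
          biprod.lift i (i ≫ g) ≫ biprod.fst ≫ s.inl = h ≫ s.inr := fun s => by
        simp [s.condition]
      refine PushoutCocone.IsColimit.mk _
        (fun s => ι ≫ hp.desc (biprod.fst ≫ s.inl) s.inr (hs s)) ?_ ?_ ?_
      · intro s
        rw [reassoc_of% hg']
        simp
      · intro s
        rw [reassoc_of% hk']
        simp
      · intro s m h1 h2
        have : p ≫ m = hp.desc (biprod.fst ≫ s.inl) s.inr (hs s) := by
          apply hp.hom_ext
          · rw [reassoc_of% hGp, h1]; simp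
          · rw [reassoc_of% hkp, h2]; simp
        rw [← this, reassoc_of% hιp]
    · obtain ⟨X, f, w', hm', hl'⟩ := (isKernelOfSome_iff _).1 hk
      refine (isKernelOfSome_iff _).2 ⟨X, ι ≫ f, ?_, ?_, ?_⟩
      · rw [reassoc_of% hk', w']
      · rw [← hk'] at hm'
        exact mono_of_mono k' ι
      · intro Z t ht
        obtain ⟨l, hl2⟩ := hl' Z (t ≫ ι) (by simpa using ht)
        exact ⟨l, by rw [← cancel_mono ι, Category.assoc, hk', hl2]⟩

lemma stable_E2 [HasZeroObject 𝒟] [HasBinaryBiproducts 𝒟] (wic : WIC 𝒟)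
    {A B X X' : 𝒟} (i : A ⟶ B) (d : B ⟶ X) (H : IsStableExact i d) (h : X' ⟶ X) :
    ∃ (B' : 𝒟) (g : B' ⟶ B) (d' : B' ⟶ X') (_ : IsPullback g d' d h)
      (i' : A ⟶ B'), i' ≫ g = i ∧ IsStableExact i' d' := by
  obtain ⟨⟨⟨w, hm, hl⟩, hc⟩, hk, hd⟩ := (stable_iff i d).1 H
  obtain ⟨B', g, d', hp, hd'⟩ := hd.2 _ h
  have hw : i ≫ d = (0 : A ⟶ X') ≫ h := by simp [w]
  have hg : hp.lift i 0 hw ≫ g = i := by simp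
  have hz : hp.lift i 0 hw ≫ d' = 0 := by simp
  have hker : IsKer (hp.lift i 0 hw) d' := by
    refine ⟨hz, ?_, fun Z t ht => ?_⟩
    · rw [← hg] at hm
      exact mono_of_mono _ g
    · obtain ⟨l, hl'⟩ := hl Z (t ≫ g) (by rw [Category.assoc, hp.w, reassoc_of% ht, zero_comp])
      refine ⟨l, hp.hom_ext ?_ ?_⟩
      · rw [Category.assoc, hg, hl']
      · rw [Category.assoc, hz, ht, comp_zero]
  refine ⟨B', g, d', hp, hp.lift i 0 hw, hg, (stable_iff _ _).2
    ⟨⟨hker, isCok_of_ker hker hd'⟩, ?_, ssc_of_isPullback hd hp⟩⟩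
  rw [← hg] at hk
  exact ssk_cancel wic hk

lemma stable_E1 [HasZeroObject 𝒟] [HasBinaryBiproducts 𝒟] (wic : WIC 𝒟)
    {A B X A' Y : 𝒟} (i : A ⟶ B) (d : B ⟶ X) (i' : A' ⟶ X) (d' : X ⟶ Y)
    (H : IsStableExact i d) (H' : IsStableExact i' d') :
    ∃ (A2 : 𝒟) (i2 : A2 ⟶ B), IsStableExact i2 (d ≫ d') := by
  obtain ⟨K, i2, p, hp, a, ha, Ha⟩ := stable_E2 wic i d H i'
  obtain ⟨-, hk, hd⟩ := (stable_iff i d).1 H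
  obtain ⟨⟨⟨w', hm', hl'⟩, -⟩, hk', hd'⟩ := (stable_iff i' d').1 H'
  obtain ⟨⟨-, wp, hpe, hpl⟩, -, -⟩ := (stable_iff a p).1 Ha
  have hdd := ssc_comp hd hd'
  have hker : IsKer i2 (d ≫ d') := by
    refine ⟨?_, ⟨fun x y hxy => hp.hom_ext hxy ?_⟩, fun Z t ht => ?_⟩
    · rw [reassoc_of% hp.w, w', comp_zero]
    · rw [← cancel_mono i', Category.assoc, Category.assoc, ← hp.w, reassoc_of% hxy]
    · obtain ⟨l, hl⟩ := hl' Z (t ≫ d) (by simpa using ht)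
      exact ⟨hp.lift t l hl.symm, by simp⟩
  refine ⟨K, i2, (stable_iff _ _).2 ⟨⟨hker, isCok_of_ker hker hdd.1⟩, ?_, hdd⟩⟩
  have hpo : IsPushout i a biprod.inl (biprod.lift i2 p) := by
    refine ⟨⟨?_⟩, ⟨?_⟩⟩
    · ext <;> simp [ha, wp]
    · have hs : ∀ s : PushoutCocone i a, ∃ l, p ≫ l = s.inr - i2 ≫ s.inl := fun s =>
        hpl _ _ (by rw [Preadditive.comp_sub, reassoc_of% ha, s.condition, sub_self])
      refine PushoutCocone.IsColimit.mk _ (fun s => biprod.desc s.inl (hs s).choose) ?_ ?_ ?_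
      · intro s; simp
      · intro s; simp [(hs s).choose_spec]
      · intro s m h1 h2
        ext
        · simp [h1]
        · rw [biprod.inr_desc, ← cancel_epi p, (hs s).choose_spec, ← h1, ← h2]
          simp [biprod.lift_eq]
  have h1 := ssk_comp (ssk_of_isPushout hk hpo) (ssk_biprodMap B hk')
  have h2 : biprod.lift i2 p ≫ biprod.map (𝟙 B) i' = i2 ≫ biprod.lift (𝟙 B) d := by
    ext <;> simp [hp.w]
  rw [h2] at h1
  exact ssk_cancel wic h1

end basic

theorem stmt16
    (wic : ∀ ⦃X Y : 𝒞⦄ (r : X ⟶ Y) (s : Y ⟶ X), s ≫ r = 𝟙 Y →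
      ∃ (K : 𝒞) (k : K ⟶ X) (w : k ≫ r = 0), Nonempty (IsLimit (KernelFork.ofι k w))) :
    IsExactStructure (fun {A B X : 𝒞} (i : A ⟶ B) (d : B ⟶ X) => IsStableExact i d) := by
  have wic' : WIC 𝒞 := fun X Y r s h => by
    obtain ⟨K, k, hk⟩ := wic r s h
    exact ⟨K, k, (isKer_iff k r).2 hk⟩
  refine ⟨fun A B X i d h => h.1, ?_, ?_, ?_, ?_⟩
  · refine ⟨0, 𝟙 0, (stable_iff _ _).2 ⟨⟨?_, ?_⟩, ssk_id _, ?_⟩⟩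
    · exact ⟨by simp, inferInstance, fun Z t _ => ⟨t, Category.comp_id t⟩⟩
    · exact ⟨by simp, inferInstance, fun Z t _ => ⟨t, Category.id_comp t⟩⟩
    · rw [← ssk_op, op_id]
      exact ssk_id _
  · intro A B X A' Y i d i' d' h h'
    exact stable_E1 wic' i d i' d' h h'
  · intro A B X X' i d H h
    obtain ⟨B', g, d', hp, i', -, hi⟩ := stable_E2 wic' i d H h
    exact ⟨B', g, d', hp, A, i', hi⟩
  · intro A B X A' i d H h
    obtain ⟨P, g, i', hp, d', -, hd⟩ := stable_E2 wic'.op d.op i.op ((stable_op i d).2 H) h.op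
    exact ⟨P.unop, g.unop, i'.unop, hp.unop.flip, X, d'.unop, (stable_op i'.unop d'.unop).1 hd⟩
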